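/- Fix a pmf p on 𝒳ⁿ with p(xⁿ) > 0 for all xⁿ, λ ≥ 0 and a distortion function d: 𝒳ⁿ×𝒳̂ⁿ→[0,∞). In the Blahut–Arimoto-type iteration (from a strictly positive q^{k−1}, set r^k(x̂ⁿ|xⁿ) = q^{k−1}(x̂ⁿ||x^{n−1})2^{−λd(xⁿ,x̂ⁿ)} / Σ_{x̂ⁿ} q^{k−1}(x̂ⁿ||x^{n−1})2^{−λd(xⁿ,x̂ⁿ)}, with q^k induced by p·r^k), let c^k_{x̂ⁿ,x^{n−1}} = q^k(x̂ⁿ||x^{n−1}) / q^{k−1}(x̂ⁿ||x^{n−1}), D_k = Σ_{xⁿ,x̂ⁿ} p(xⁿ)r^k(x̂ⁿ|xⁿ)d(xⁿ,x̂ⁿ), and R^k_n(D_k) = (1/n)·Σ_{xⁿ,x̂ⁿ} p(xⁿ)r^k(x̂ⁿ|xⁿ) log₂( r^k(x̂ⁿ|xⁿ)/q^k(x̂ⁿ||x^{n−1}) ). If F := log₂ max_{x̂ⁿ,x^{n−1}} c^k_{x̂ⁿ,x^{n−1}} − Σ_{xⁿ,x̂ⁿ} p(xⁿ)r^k(x̂ⁿ|xⁿ)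 log₂ c^k_{x̂ⁿ,x^{n−1}} ≤ ε, then 0 ≤ R^k_n(D_k) − Rₙ(D_k) ≤ ε. -/

import Mathlib

open scoped BigOperators
open Filter

noncomputable section

namespace FFRD

variable {X Y : Type} [Fintype X] [DecidableEq X] [Fintype Y] [DecidableEq Y] {n : ℕ}

/-- `p` is a probability mass function on a finite type. -/
def IsPMF {α : Type} [Fintype α] (p : α → ℝ) : Prop :=
  (∀ a, 0 ≤ p a) ∧ ∑ a, p a = 1

/-- `r` is a conditional pmf on `Fin n → Y` given `Fin n → X`. -/
def IsCondPMF (r : (Fin n → X) → (Fin n → Y) → ℝ) : Prop :=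
  (∀ x y, 0 ≤ r x y) ∧ ∀ x, ∑ y, r x y = 1

/-- The causal conditioning pmf `q_r(ŷⁿ‖x^{n-1})` induced by the joint pmf `p(x)·r(y|x)`:
the product over `i` of the conditional probabilities `P(y_i | y^{i-1}, x^{i-1})`. -/
def causalCond (p : (Fin n → X) → ℝ) (r : (Fin n → X) → (Fin n → Y) → ℝ)
    (x : Fin n → X) (y : Fin n → Y) : ℝ :=
  ∏ i : Fin n,
    ((∑ x' : Fin n → X, ∑ y' : Fin n → Y,
        if (∀ j, j < i → x' j = x j) ∧ (∀ j, j ≤ i → y' j = y j)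
        then p x' * r x' y' else 0) /
      (∑ x' : Fin n → X, ∑ y' : Fin n → Y,
        if (∀ j, j < i → x' j = x j) ∧ (∀ j, j < i → y' j = y j)
        then p x' * r x' y' else 0))

/-- Directed information `I(X̂ⁿ → Xⁿ)` computed from source pmf `p` and conditional pmf `r`. -/
def directedInfo (p : (Fin n → X) → ℝ) (r : (Fin n → X) → (Fin n → Y) → ℝ) : ℝ :=
  ∑ x, ∑ y, p x * r x y * Real.logb 2 (r x y / causalCond p r x y)

/-- The `n`-th order rate distortion function with feed-forward. -/
def Rn (n : ℕ) (p : (Fin n → X) → ℝ) (d : (Fin n → X) → (Fin n → Y) → ℝ) (D : ℝ) : ℝ :=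
  (1 / (n : ℝ)) *
    sInf {v | ∃ r : (Fin n → X) → (Fin n → Y) → ℝ, IsCondPMF r ∧
      (∑ x, ∑ y, p x * r x y * d x y) ≤ D ∧ v = directedInfo p r}

/-- Left shift on sequences. -/
def shift (X : Type) : (ℕ → X) → (ℕ → X) := fun ω k => ω (k + 1)

/-- The law of the first `n` coordinates under `μ`. -/
def lawFin [MeasurableSpace X] (μ : MeasureTheory.Measure (ℕ → X)) (n : ℕ)
    (x : Fin n → X) : ℝ :=
  (μ {ω | ∀ i : Fin n, ω (i : ℕ) = x i}).toReal

/-- Per-letter distortion extended to blocks of length `L`. -/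
def dBlock (d0 : X → Y → ℝ) (L : ℕ) (x : Fin L → X) (y : Fin L → Y) : ℝ :=
  (1 / (L : ℝ)) * ∑ i, d0 (x i) (y i)

end FFRD

namespace FFRD

/-- `q` is a causal conditioning pmf `q(x̂ⁿ‖x^{n−1}) = ∏ᵢ qᵢ(x̂ᵢ | x̂^{i−1}, x^{i−1})`,
where each factor is a pmf on `Y` depending only on the strict pasts of `x` and `y`. -/
def IsCausalCondKernel {X Y : Type} [Fintype X] [Fintype Y] {n : ℕ}
    (q : (Fin n → X) → (Fin n → Y) → ℝ) : Prop :=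
  ∃ qi : Fin n → (Fin n → X) → (Fin n → Y) → Y → ℝ,
    (∀ i x y, (∀ b, 0 ≤ qi i x y b) ∧ ∑ b, qi i x y b = 1) ∧
    (∀ i x x' y y', (∀ j, j < i → x j = x' j) → (∀ j, j < i → y j = y' j) →
      qi i x y = qi i x' y') ∧
    (∀ x y, q x y = ∏ i, qi i x y (y i))

/-- `I_FF(r, q) = Σ_{xⁿ,x̂ⁿ} p(xⁿ) r(x̂ⁿ|xⁿ) log₂ ( r(x̂ⁿ|xⁿ) / q(x̂ⁿ‖x^{n−1}) )`. -/
def IFF {X Y : Type} [Fintype X] [Fintype Y] {n : ℕ} (p : (Fin n → X) → ℝ)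
    (r q : (Fin n → X) → (Fin n → Y) → ℝ) : ℝ :=
  ∑ x, ∑ y, p x * r x y * Real.logb 2 (r x y / q x y)

end FFRD

namespace FFRD

def relA {X Y : Type} {n : ℕ} (i : Fin n) (z' z : (Fin n → X) × (Fin n → Y)) : Prop :=
  (∀ j, j < i → z'.1 j = z.1 j) ∧ (∀ j, j < i → z'.2 j = z.2 j)

def relB {X Y : Type} {n : ℕ} (i : Fin n) (z' z : (Fin n → X) × (Fin n → Y)) : Prop :=
  (∀ j, j < i → z'.1 j = z.1 j) ∧ (∀ j, j ≤ i → z'.2 j = z.2 j)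

open Classical in
def sA {X Y : Type} [Fintype X] [Fintype Y] {n : ℕ}
    (P : (Fin n → X) × (Fin n → Y) → ℝ) (i : Fin n) (z : (Fin n → X) × (Fin n → Y)) : ℝ :=
  ∑ z', if relA i z' z then P z' else 0

open Classical in
def sB {X Y : Type} [Fintype X] [Fintype Y] {n : ℕ}
    (P : (Fin n → X) × (Fin n → Y) → ℝ) (i : Fin n) (z : (Fin n → X) × (Fin n → Y)) : ℝ :=
  ∑ z', if relB i z' z then P z' else 0

theorem causalCond_eq {X Y : Type} [Fintype X] [DecidableEq X] [Fintype Y] [DecidableEq Y] {n : ℕ}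
    (p : (Fin n → X) → ℝ) (r : (Fin n → X) → (Fin n → Y) → ℝ) (x : Fin n → X) (y : Fin n → Y) :
    causalCond p r x y = ∏ i, (sB (fun z => p z.1 * r z.1 z.2) i (x, y) /
      sA (fun z => p z.1 * r z.1 z.2) i (x, y)) := by
  unfold causalCond sA sB relA relB
  refine Finset.prod_congr rfl fun i _ => ?_
  rw [Fintype.sum_prod_type, Fintype.sum_prod_type]
  congr 1
  · refine Finset.sum_congr rfl fun a _ => Finset.sum_congr rfl fun b _ => ?_
    congr
  · refine Finset.sum_congr rfl fun a _ => Finset.sum_congr rfl fun b _ => ?_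
    congr

section
variable {X Y : Type} {n : ℕ}

theorem relA_symm {i : Fin n} {z z' : (Fin n → X) × (Fin n → Y)} (h : relA i z z') :
    relA i z' z := ⟨fun j hj => (h.1 j hj).symm, fun j hj => (h.2 j hj).symm⟩

theorem relA_trans {i : Fin n} {z z' z'' : (Fin n → X) × (Fin n → Y)} (h : relA i z z')
    (h' : relA i z' z'') : relA i z z'' :=
  ⟨fun j hj => (h.1 j hj).trans (h'.1 j hj), fun j hj => (h.2 j hj).trans (h'.2 j hj)⟩

theorem relB_symm {i : Fin n} {z z' : (Fin n → X) × (Fin n → Y)} (h : relB i z z') :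
    relB i z' z := ⟨fun j hj => (h.1 j hj).symm, fun j hj => (h.2 j hj).symm⟩

theorem relB_trans {i : Fin n} {z z' z'' : (Fin n → X) × (Fin n → Y)} (h : relB i z z')
    (h' : relB i z' z'') : relB i z z'' :=
  ⟨fun j hj => (h.1 j hj).trans (h'.1 j hj), fun j hj => (h.2 j hj).trans (h'.2 j hj)⟩

theorem relB.relA {i : Fin n} {z z' : (Fin n → X) × (Fin n → Y)} (h : relB i z z') :
    relA i z z' := ⟨h.1, fun j hj => h.2 j hj.le⟩

theorem relA.relB_lt {i k : Fin n} (hik : i < k) {z z' : (Fin n → X) × (Fin n → Y)}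
    (h : relA k z z') : relB i z z' :=
  ⟨fun j hj => h.1 j (hj.trans hik), fun j hj => h.2 j (hj.trans_lt hik)⟩

theorem relB_upd (i : Fin n) (z z' : (Fin n → X) × (Fin n → Y)) (b : Y) :
    relB i z (z'.1, Function.update z'.2 i b) ↔ (b = z.2 i ∧ relA i z z') := by
  constructor
  · intro h
    refine ⟨?_, h.1, fun j hj => ?_⟩
    · have := h.2 i le_rfl
      simpa using this.symm
    · have := h.2 j hj.le
      simpa [hj.ne] using this
  · rintro ⟨rfl, h⟩
    refine ⟨h.1, fun j hj => ?_⟩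
    rcases hj.lt_or_eq with hj | rfl
    · simpa [hj.ne] using h.2 j hj
    · simp

theorem relA_upd (i : Fin n) (z' : (Fin n → X) × (Fin n → Y)) (b : Y) :
    relA i (z'.1, Function.update z'.2 i b) z' :=
  ⟨fun _ _ => rfl, fun j hj => by simp [hj.ne]⟩

variable [Fintype X] [Fintype Y]

theorem sA_congr (P : (Fin n → X) × (Fin n → Y) → ℝ) {i : Fin n}
    {z z' : (Fin n → X) × (Fin n → Y)} (h : relA i z z') : sA P i z = sA P i z' := by
  classical
  unfold sA
  refine Finset.sum_congr rfl fun w _ => ?_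
  have : relA i w z ↔ relA i w z' := ⟨fun g => relA_trans g h, fun g => relA_trans g (relA_symm h)⟩
  simp only [this]

theorem sB_congr (P : (Fin n → X) × (Fin n → Y) → ℝ) {i : Fin n}
    {z z' : (Fin n → X) × (Fin n → Y)} (h : relB i z z') : sB P i z = sB P i z' := by
  classical
  unfold sB
  refine Finset.sum_congr rfl fun w _ => ?_
  have : relB i w z ↔ relB i w z' := ⟨fun g => relB_trans g h, fun g => relB_trans g (relB_symm h)⟩
  simp only [this]

open Classical in
theorem sum_split (f : (Fin n → X) × (Fin n → Y) → ℝ) (i : Fin n)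
    (z' : (Fin n → X) × (Fin n → Y)) :
    (∑ z, if relA i z z' then f z else 0) =
      ∑ b, ∑ z, if relB i z (z'.1, Function.update z'.2 i b) then f z else 0 := by
  rw [Finset.sum_comm]
  refine Finset.sum_congr rfl fun z _ => ?_
  simp only [relB_upd, ite_and]
  simp

theorem sA_nonneg {P : (Fin n → X) × (Fin n → Y) → ℝ} (hP : ∀ z, 0 ≤ P z) (i : Fin n)
    (z : (Fin n → X) × (Fin n → Y)) : 0 ≤ sA P i z := by
  unfold sA
  refine Finset.sum_nonneg fun w _ => ?_
  split_ifs
  exacts [hP w, le_rfl]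

theorem sB_nonneg {P : (Fin n → X) × (Fin n → Y) → ℝ} (hP : ∀ z, 0 ≤ P z) (i : Fin n)
    (z : (Fin n → X) × (Fin n → Y)) : 0 ≤ sB P i z := by
  unfold sB
  refine Finset.sum_nonneg fun w _ => ?_
  split_ifs
  exacts [hP w, le_rfl]

theorem le_sA {P : (Fin n → X) × (Fin n → Y) → ℝ} (hP : ∀ z, 0 ≤ P z) (i : Fin n)
    (z : (Fin n → X) × (Fin n → Y)) : P z ≤ sA P i z := by
  classical
  unfold sA
  have h := Finset.single_le_sum (f := fun w => if relA i w z then P w else 0) (s := Finset.univ)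
    (fun w _ => by split_ifs; exacts [hP w, le_rfl]) (Finset.mem_univ z)
  have hz : relA i z z := ⟨fun _ _ => rfl, fun _ _ => rfl⟩
  simpa [hz] using h

theorem le_sB {P : (Fin n → X) × (Fin n → Y) → ℝ} (hP : ∀ z, 0 ≤ P z) (i : Fin n)
    (z : (Fin n → X) × (Fin n → Y)) : P z ≤ sB P i z := by
  classical
  unfold sB
  have h := Finset.single_le_sum (f := fun w => if relB i w z then P w else 0) (s := Finset.univ)
    (fun w _ => by split_ifs; exacts [hP w, le_rfl]) (Finset.mem_univ z)
  have hz : relB i z z := ⟨fun _ _ => rfl, fun _ _ => rfl⟩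
  simpa [hz] using h

open Classical in
theorem sum_cond_le {Q : (Fin n → X) × (Fin n → Y) → ℝ} (i : Fin n)
    (z : (Fin n → X) × (Fin n → Y)) :
    ∑ b, sB Q i (z.1, Function.update z.2 i b) / sA Q i (z.1, Function.update z.2 i b) ≤ 1 := by
  have h1 : ∀ b, sA Q i (z.1, Function.update z.2 i b) = sA Q i z :=
    fun b => sA_congr Q (relA_upd i z b)
  simp only [h1]
  rw [← Finset.sum_div]
  have h2 : ∑ b, sB Q i (z.1, Function.update z.2 i b) = sA Q i z := by
    unfold sA sB
    rw [sum_split]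
  rw [h2]
  exact div_self_le_one _

open Classical in
theorem step {P Q : (Fin n → X) × (Fin n → Y) → ℝ} (hP : ∀ z, 0 ≤ P z) (hQ : ∀ z, 0 ≤ Q z)
    (k : Fin n) (h : (Fin n → X) × (Fin n → Y) → ℝ) (hh : ∀ z, 0 ≤ h z)
    (hc : ∀ z z', relA k z z' → h z = h z') :
    ∑ z, P z * (h z * ((sB Q k z / sA Q k z) / (sB P k z / sA P k z))) ≤ ∑ z, P z * h z := by
  have e1 : ∑ z, P z * (h z * ((sB Q k z / sA Q k z) / (sB P k z / sA P k z))) =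
      ∑ z', P z' * h z' * ∑ z, if relA k z z' then P z * ((sB Q k z / sA Q k z) / sB P k z)
        else 0 := by
    simp only [Finset.mul_sum]
    rw [Finset.sum_comm]
    refine Finset.sum_congr rfl fun z _ => ?_
    have : P z * (h z * ((sB Q k z / sA Q k z) / (sB P k z / sA P k z))) =
      (P z * (h z * ((sB Q k z / sA Q k z) / sB P k z))) * sA P k z := by
      rw [div_div_eq_mul_div]; ring
    rw [this]
    conv_lhs => rhs; rw [sA]
    rw [Finset.mul_sum]
    refine Finset.sum_congr rfl fun z' _ => ?_
    by_cases g : relA k z z'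
    · rw [if_pos g, if_pos (relA_symm g), hc z z' g]; ring
    · rw [if_neg g, if_neg (fun g' => g (relA_symm g'))]; ring
  rw [e1]
  refine Finset.sum_le_sum fun z' _ => ?_
  refine mul_le_of_le_one_right (mul_nonneg (hP _) (hh _)) ?_
  rw [sum_split]
  refine le_trans (Finset.sum_le_sum fun b _ => ?_) (sum_cond_le (Q := Q) k z')
  set w : (Fin n → X) × (Fin n → Y) := (z'.1, Function.update z'.2 k b) with hw
  have e2 : (∑ z, if relB k z w then P z * ((sB Q k z / sA Q k z) / sB P k z) else 0) =
      sB P k w * ((sB Q k w / sA Q k w) / sB P k w) := by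
    conv_rhs => lhs; rw [sB]
    rw [Finset.sum_mul]
    refine Finset.sum_congr rfl fun z _ => ?_
    split_ifs with g
    · rw [sB_congr Q g, sB_congr P g, sA_congr Q g.relA]
    · simp
  rw [e2]
  have h0 : 0 ≤ sB Q k w / sA Q k w := div_nonneg (sB_nonneg hQ _ _) (sA_nonneg hQ _ _)
  calc sB P k w * ((sB Q k w / sA Q k w) / sB P k w)
      = (sB Q k w / sA Q k w) * (sB P k w / sB P k w) := by ring
    _ ≤ _ := mul_le_of_le_one_right h0 (div_self_le_one _)

theorem key {P Q : (Fin n → X) × (Fin n → Y) → ℝ} (hP : ∀ z, 0 ≤ P z) (hQ : ∀ z, 0 ≤ Q z) :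
    ∑ z, P z * ((∏ i, (sB Q i z / sA Q i z)) / ∏ i, (sB P i z / sA P i z)) ≤ ∑ z, P z := by
  classical
  have main : ∀ k : ℕ, k ≤ n → ∑ z, P z * ∏ i ∈ Finset.univ.filter (fun i : Fin n => i.val < k),
      ((sB Q i z / sA Q i z) / (sB P i z / sA P i z)) ≤ ∑ z, P z := by
    intro k
    induction k with
    | zero => intro _; simp
    | succ k ih =>
      intro hk
      refine le_trans ?_ (ih (by omega))
      let K : Fin n := ⟨k, hk⟩
      have hins : Finset.univ.filter (fun i : Fin n => i.val < k + 1) =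
          insert K (Finset.univ.filter (fun i : Fin n => i.val < k)) := by
        ext i
        simp [K, Fin.ext_iff]
        omega
      have hnot : K ∉ Finset.univ.filter (fun i : Fin n => i.val < k) := by simp [K]
      simp only [hins, Finset.prod_insert hnot]
      refine le_trans (le_of_eq ?_) (step hP hQ K (fun z =>
        ∏ i ∈ Finset.univ.filter (fun i : Fin n => i.val < k),
          ((sB Q i z / sA Q i z) / (sB P i z / sA P i z))) ?_ ?_)
      · refine Finset.sum_congr rfl fun z _ => ?_
        ring
      · intro z
        refine Finset.prod_nonneg fun i _ => ?_
        exact div_nonneg (div_nonneg (sB_nonneg hQ _ _) (sA_nonneg hQ _ _))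
          (div_nonneg (sB_nonneg hP _ _) (sA_nonneg hP _ _))
      · intro z z' g
        refine Finset.prod_congr rfl fun i hi => ?_
        have hi' : i < K := by simpa [K, Fin.lt_def] using hi
        have gB := relA.relB_lt hi' g
        rw [sB_congr Q gB, sB_congr P gB, sA_congr Q gB.relA, sA_congr P gB.relA]
  have := main n le_rfl
  simpa [Finset.prod_div_distrib] using this

end

section
variable {X Y : Type} [Fintype X] [DecidableEq X] [Fintype Y] [DecidableEq Y] {n : ℕ}

theorem causalCond_nonneg {p : (Fin n → X) → ℝ} {r : (Fin n → X) → (Fin n → Y) → ℝ}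
    (h : ∀ x y, 0 ≤ p x * r x y) (x : Fin n → X) (y : Fin n → Y) : 0 ≤ causalCond p r x y := by
  rw [causalCond_eq]
  exact Finset.prod_nonneg fun i _ => div_nonneg (sB_nonneg (fun z => h _ _) _ _)
    (sA_nonneg (fun z => h _ _) _ _)

theorem causalCond_pos {p : (Fin n → X) → ℝ} {r : (Fin n → X) → (Fin n → Y) → ℝ}
    (h : ∀ x y, 0 ≤ p x * r x y) (x : Fin n → X) (y : Fin n → Y) (hxy : 0 < p x * r x y) :
    0 < causalCond p r x y := by
  rw [causalCond_eq]
  exact Finset.prod_pos fun i _ => div_pos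
    (lt_of_lt_of_le hxy (le_sB (P := fun z => p z.1 * r z.1 z.2) (fun z => h _ _) i (x, y)))
    (lt_of_lt_of_le hxy (le_sA (P := fun z => p z.1 * r z.1 z.2) (fun z => h _ _) i (x, y)))

theorem key' {p : (Fin n → X) → ℝ} {r s : (Fin n → X) → (Fin n → Y) → ℝ}
    (h : ∀ x y, 0 ≤ p x * r x y) (h' : ∀ x y, 0 ≤ p x * s x y) :
    ∑ x, ∑ y, p x * r x y * (causalCond p s x y / causalCond p r x y) ≤
      ∑ x, ∑ y, p x * r x y := by
  have := key (P := fun z : (Fin n → X) × (Fin n → Y) => p z.1 * r z.1 z.2)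
    (Q := fun z => p z.1 * s z.1 z.2) (fun z => h _ _) (fun z => h' _ _)
  rw [Fintype.sum_prod_type, Fintype.sum_prod_type] at this
  simpa only [causalCond_eq] using this

end

end FFRD

open FFRD in
/-- Corollary 1: if the stopping quantity `F` of the Blahut–Arimoto-type
iteration is at most `ε`, then the current value `R^k_n(D_k)` is within `ε` above `Rₙ(D_k)`. -/
theorem BA_stopping_criterion
    {X Y : Type} [Fintype X] [Nonempty X] [DecidableEq X] [Fintype Y] [Nonempty Y]
    [DecidableEq Y]
    (n : ℕ) (hn : 1 ≤ n)
    (p : (Fin n → X) → ℝ) (hp : IsPMF p) (hppos : ∀ x, 0 < p x)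
    (lam : ℝ) (hlam : 0 ≤ lam)
    (d : (Fin n → X) → (Fin n → Y) → ℝ) (hd : ∀ x y, 0 ≤ d x y)
    (q0 : (Fin n → X) → (Fin n → Y) → ℝ)
    (hq0 : IsCausalCondKernel q0) (hq0pos : ∀ x y, 0 < q0 x y)
    (r1 : (Fin n → X) → (Fin n → Y) → ℝ)
    (hr1 : ∀ x y, r1 x y =
      q0 x y * 2 ^ (-(lam * d x y)) / ∑ y', q0 x y' * 2 ^ (-(lam * d x y')))
    (q1 : (Fin n → X) → (Fin n → Y) → ℝ) (hq1 : q1 = causalCond p r1)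
    (c : (Fin n → X) → (Fin n → Y) → ℝ) (hc : ∀ x y, c x y = q1 x y / q0 x y)
    (Dk : ℝ) (hDk : Dk = ∑ x, ∑ y, p x * r1 x y * d x y)
    (Rk : ℝ)
    (hRk : Rk = (1 / (n : ℝ)) *
      ∑ x, ∑ y, p x * r1 x y * Real.logb 2 (r1 x y / q1 x y))
    (ε : ℝ)
    (hF : Real.logb 2 (⨆ z : (Fin n → X) × (Fin n → Y), c z.1 z.2) -
      (∑ x, ∑ y, p x * r1 x y * Real.logb 2 (c x y)) ≤ ε) :
    0 ≤ Rk - Rn n p d Dk ∧ Rk - Rn n p d Dk ≤ ε := by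
  have hP1 : ∑ x, p x = 1 := hp.2
  set S : (Fin n → X) → ℝ := fun x => ∑ y', q0 x y' * 2 ^ (-(lam * d x y')) with hS
  have htpos : ∀ x y, (0:ℝ) < 2 ^ (-(lam * d x y)) := fun x y => by positivity
  have hSpos : ∀ x, 0 < S x := fun x =>
    Finset.sum_pos (fun y _ => mul_pos (hq0pos x y) (htpos x y)) Finset.univ_nonempty
  have hr1' : ∀ x y, r1 x y = q0 x y * 2 ^ (-(lam * d x y)) / S x := hr1
  have hr1pos : ∀ x y, 0 < r1 x y := fun x y => by
    rw [hr1']; exact div_pos (mul_pos (hq0pos x y) (htpos x y)) (hSpos x)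
  have hr1sum : ∀ x, ∑ y, r1 x y = 1 := fun x => by
    simp only [hr1']
    rw [← Finset.sum_div]
    exact div_self (hSpos x).ne'
  have hr1c : IsCondPMF r1 := ⟨fun x y => (hr1pos x y).le, hr1sum⟩
  have hJpos : ∀ x y, 0 < p x * r1 x y := fun x y => mul_pos (hppos x) (hr1pos x y)
  have hq1pos : ∀ x y, 0 < q1 x y := fun x y => by
    rw [hq1]; exact causalCond_pos (fun x y => (hJpos x y).le) x y (hJpos x y)
  have hcpos : ∀ x y, 0 < c x y := fun x y => by
    rw [hc]; exact div_pos (hq1pos x y) (hq0pos x y)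
  set M : ℝ := ⨆ z : (Fin n → X) × (Fin n → Y), c z.1 z.2 with hM
  have hcM : ∀ x y, c x y ≤ M := fun x y =>
    le_ciSup (f := fun z : (Fin n → X) × (Fin n → Y) => c z.1 z.2)
      (Set.finite_range _).bddAbove (x, y)
  have hMpos : 0 < M := by
    obtain ⟨x⟩ : Nonempty (Fin n → X) := inferInstance
    obtain ⟨y⟩ : Nonempty (Fin n → Y) := inferInstance
    exact (hcpos x y).trans_le (hcM x y)
  have hsum1 : ∀ r : (Fin n → X) → (Fin n → Y) → ℝ, IsCondPMF r → ∀ f : (Fin n → X) → ℝ,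
      ∑ x, ∑ y, p x * r x y * f x = ∑ x, p x * f x := fun r hr f => by
    refine Finset.sum_congr rfl fun x _ => ?_
    rw [← Finset.sum_mul, ← Finset.mul_sum, hr.2 x, mul_one]
  have hsum1' : ∀ r : (Fin n → X) → (Fin n → Y) → ℝ, IsCondPMF r →
      ∑ x, ∑ y, p x * r x y = 1 := fun r hr => by
    have := hsum1 r hr (fun _ => 1)
    simpa [hP1] using this
  set L : ℝ := ∑ x, ∑ y, p x * r1 x y * Real.logb 2 (c x y) with hL
  set T : ℝ := ∑ x, p x * Real.logb 2 (S x) with hT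
  have hlog2 : (0:ℝ) < Real.log 2 := Real.log_pos (by norm_num)
  -- nonnegativity of F
  have hF0 : L ≤ Real.logb 2 M := by
    calc L ≤ ∑ x, ∑ y, p x * r1 x y * Real.logb 2 M := by
          refine Finset.sum_le_sum fun x _ => Finset.sum_le_sum fun y _ => ?_
          exact mul_le_mul_of_nonneg_left
            (Real.logb_le_logb_of_le (by norm_num) (hcpos x y) (hcM x y)) (hJpos x y).le
      _ = Real.logb 2 M := by
          rw [hsum1 r1 hr1c (fun _ => Real.logb 2 M), ← Finset.sum_mul, hP1, one_mul]
  have hI1 : directedInfo p r1 = -lam * Dk - T - L := by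
    have e : ∀ x y, p x * r1 x y * Real.logb 2 (r1 x y / causalCond p r1 x y) =
        -lam * (p x * r1 x y * d x y) - p x * r1 x y * Real.logb 2 (S x) -
          p x * r1 x y * Real.logb 2 (c x y) := fun x y => by
      have h1 : r1 x y / causalCond p r1 x y = 2 ^ (-(lam * d x y)) / S x / c x y := by
        rw [← hq1, hc, hr1']
        have := (hq0pos x y).ne'
        have := (hq1pos x y).ne'
        have := (hSpos x).ne'
        field_simp
      rw [h1, Real.logb_div (div_pos (htpos x y) (hSpos x)).ne' (hcpos x y).ne',
        Real.logb_div (htpos x y).ne' (hSpos x).ne', Real.logb_rpow (by norm_num) (by norm_num)]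
      ring
    unfold directedInfo
    simp only [e, Finset.sum_sub_distrib, ← Finset.mul_sum]
    rw [hsum1 r1 hr1c (fun x => Real.logb 2 (S x)), ← hDk]
  have hlow : ∀ r : (Fin n → X) → (Fin n → Y) → ℝ, IsCondPMF r →
      (∑ x, ∑ y, p x * r x y * d x y) ≤ Dk →
      directedInfo p r1 - (Real.logb 2 M - L) ≤ directedInfo p r := by
    intro r hr hrD
    have hJ : ∀ x y, 0 ≤ p x * r x y := fun x y => mul_nonneg (hppos x).le (hr.1 x y)
    have pt : ∀ x y, (p x * r x y - p x * r1 x y *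
          (causalCond p r x y / causalCond p r1 x y)) / Real.log 2 ≤
        p x * r x y * Real.logb 2 (r x y / causalCond p r x y) + lam * (p x * r x y * d x y)
          + p x * r x y * Real.logb 2 (S x) + p x * r x y * Real.logb 2 M := fun x y => by
      have hq1' : 0 < causalCond p r1 x y := by rw [← hq1]; exact hq1pos x y
      rcases (hr.1 x y).eq_or_lt with h0 | h0
      · rw [← h0]
        simp only [mul_zero, zero_mul, add_zero, zero_sub]
        refine div_nonpos_of_nonpos_of_nonneg ?_ hlog2.le
        exact neg_nonpos.2 (mul_nonneg (hJpos x y).le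
          (div_nonneg (causalCond_nonneg hJ x y) hq1'.le))
      · have hqr : 0 < causalCond p r x y :=
          causalCond_pos hJ x y (mul_pos (hppos x) h0)
        set Q := causalCond p r x y with hQ
        set t : ℝ := (2 ^ (-(lam * d x y)) / S x / M) / (r x y / Q) with ht
        have htp : 0 < t := by
          have := htpos x y
          have := hSpos x
          positivity
        have hlogt : Real.logb 2 t = -(lam * d x y) - Real.logb 2 (S x) - Real.logb 2 M -
            Real.logb 2 (r x y / Q) := by
          rw [ht, Real.logb_div (div_pos (div_pos (htpos x y) (hSpos x)) hMpos).ne'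
            (div_pos h0 hqr).ne', Real.logb_div (div_pos (htpos x y) (hSpos x)).ne' hMpos.ne',
            Real.logb_div (htpos x y).ne' (hSpos x).ne', Real.logb_rpow (by norm_num) (by norm_num)]
        have hle : Real.logb 2 t ≤ (t - 1) / Real.log 2 := by
          unfold Real.logb
          exact div_le_div_of_nonneg_right (Real.log_le_sub_one_of_pos htp) hlog2.le
        have hrt : r x y * t ≤ r1 x y * (Q / causalCond p r1 x y) := by
          have hM' : q1 x y ≤ q0 x y * M := by
            have := hcM x y
            rw [hc, div_le_iff₀ (hq0pos x y)] at this
            linarith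
          have e1 : r x y * t = r1 x y * (Q / (q0 x y * M)) := by
            rw [ht, hr1']
            have := (hq0pos x y).ne'
            have := (hSpos x).ne'
            field_simp
          rw [e1, ← hq1]
          refine mul_le_mul_of_nonneg_left ?_ (hr1pos x y).le
          exact div_le_div_of_nonneg_left hqr.le (hq1pos x y) hM'
        have h3 : (p x * r x y - p x * r1 x y * (Q / causalCond p r1 x y)) / Real.log 2 ≤
            p x * r x y * ((1 - t) / Real.log 2) := by
          rw [← mul_div_assoc (p x * r x y)]
          refine div_le_div_of_nonneg_right ?_ hlog2.le
          have := mul_le_mul_of_nonneg_left hrt (hppos x).le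
          nlinarith
        have h4 : p x * r x y * ((1 - t) / Real.log 2) ≤ p x * r x y * (-Real.logb 2 t) := by
          refine mul_le_mul_of_nonneg_left ?_ (hJ x y)
          have : (1 - t) / Real.log 2 = -((t - 1) / Real.log 2) := by ring
          rw [this]
          linarith
        refine h3.trans (h4.trans (le_of_eq ?_))
        rw [hlogt]; ring
    have hs := Finset.sum_le_sum fun x (_ : x ∈ Finset.univ) =>
      Finset.sum_le_sum fun y (_ : y ∈ Finset.univ) => pt x y
    simp only [← Finset.sum_div, Finset.sum_sub_distrib, Finset.sum_add_distrib,
      ← Finset.mul_sum] at hs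
    rw [hsum1 r hr (fun x => Real.logb 2 (S x)), hsum1 r hr (fun _ => Real.logb 2 M),
      ← Finset.sum_mul, hP1, one_mul] at hs
    have hk := key' (p := p) (r := r1) (s := r) (fun x y => (hJpos x y).le) hJ
    rw [hsum1' r1 hr1c] at hk
    have hs1 := hsum1' r hr
    simp only [← Finset.mul_sum] at hs1
    have h0 : 0 ≤ (∑ x, p x * ∑ y, r x y - ∑ x, ∑ y, p x * r1 x y *
          (causalCond p r x y / causalCond p r1 x y)) / Real.log 2 :=
      div_nonneg (by linarith) hlog2.le
    have hld := mul_le_mul_of_nonneg_left hrD hlam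
    have h5 := h0.trans hs
    rw [hI1]
    unfold directedInfo
    linarith
  have hmem : directedInfo p r1 ∈ {v | ∃ r : (Fin n → X) → (Fin n → Y) → ℝ, IsCondPMF r ∧
      (∑ x, ∑ y, p x * r x y * d x y) ≤ Dk ∧ v = directedInfo p r} :=
    ⟨r1, hr1c, hDk.ge, rfl⟩
  have hRk' : Rk = (1 / (n : ℝ)) * directedInfo p r1 := by
    rw [hRk, hq1]; rfl
  have hn0 : (0:ℝ) ≤ 1 / (n:ℝ) := by positivity
  have hn1 : 1 / (n:ℝ) ≤ 1 := by
    have : (1:ℝ) ≤ n := by exact_mod_cast hn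
    rw [div_le_one (by linarith)]; exact this
  rw [hRk', Rn, ← mul_sub]
  constructor
  · refine mul_nonneg hn0 (sub_nonneg.2 (csInf_le ?_ hmem))
    refine ⟨directedInfo p r1 - (Real.logb 2 M - L), ?_⟩
    rintro v ⟨r, hr, hrD, rfl⟩
    exact hlow r hr hrD
  · have h1 : directedInfo p r1 - (Real.logb 2 M - L) ≤
        sInf {v | ∃ r : (Fin n → X) → (Fin n → Y) → ℝ, IsCondPMF r ∧
          (∑ x, ∑ y, p x * r x y * d x y) ≤ Dk ∧ v = directedInfo p r} := by
      refine le_csInf ⟨_, hmem⟩ ?_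
      rintro v ⟨r, hr, hrD, rfl⟩
      exact hlow r hr hrD
    have h2 := mul_le_mul_of_nonneg_left (sub_le_comm.1 h1) hn0
    have h3 : 1 / (n:ℝ) * (Real.logb 2 M - L) ≤ 1 * (Real.logb 2 M - L) :=
      mul_le_mul_of_nonneg_right hn1 (by linarith)
    linarith
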